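/- arXiv:1305.0620 — 5 statements merged into one kernel-verified Lean document; each statement's English description precedes it below -/
import Mathlib

section
/- Let X_ρ be a ρ-complete modular space whose modular ρ has the Fatou property. If T : X_ρ → X_ρ is a mapping for which there exists c ∈ [0,1) with ρ(Tx − Ty) ≤ c·ρ(x − y) for all x, y ∈ X_ρ, and sup_{n≥1} ρ(2Tⁿω) < ∞ for some ω ∈ X_ρ, then T has a fixed point. -/
open Filter Topology ENNReal NNReal

variable {X : Type*} [AddCommGroup X] [Module ℝ X]

/-- A modular on a real vector space `X`. -/
def IsModular (ρ : X → ℝ≥0∞) : Prop :=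
  (∀ x : X, ρ x = 0 ↔ x = 0) ∧ (∀ x : X, ρ (-x) = ρ x) ∧
    (∀ x y : X, ∀ α β : ℝ, 0 ≤ α → 0 ≤ β → α + β = 1 →
      ρ (α • x + β • y) ≤ ρ x + ρ y)

/-- For `s ∈ (0,1]`, an `s`-convex modular on a real vector space `X`. -/
def IsSConvexModular (ρ : X → ℝ≥0∞) (s : ℝ) : Prop :=
  (∀ x : X, ρ x = 0 ↔ x = 0) ∧ (∀ x : X, ρ (-x) = ρ x) ∧
    (∀ x y : X, ∀ a b : ℝ, 0 ≤ a → 0 ≤ b → a ^ s + b ^ s = 1 →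
      ρ (a • x + b • y) ≤ ENNReal.ofReal (a ^ s) * ρ x + ENNReal.ofReal (b ^ s) * ρ y)

/-- The modular space `X_ρ = {x ∈ X : ρ(αx) → 0 as α → 0}`. -/
def modularSpace (ρ : X → ℝ≥0∞) : Set X :=
  {x : X | Tendsto (fun α : ℝ => ρ (α • x)) (𝓝 0) (𝓝 0)}

/-- `ρ`-convergence of a sequence to a point: `ρ(x_n − a) → 0`. -/
def RhoTendsto (ρ : X → ℝ≥0∞) (x : ℕ → X) (a : X) : Prop :=
  Tendsto (fun n => ρ (x n - a)) atTop (𝓝 0)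

/-- A sequence is `ρ`-Cauchy if `ρ(x_m − x_n) → 0` as `m, n → ∞`. -/
def RhoCauchy (ρ : X → ℝ≥0∞) (x : ℕ → X) : Prop :=
  Tendsto (fun p : ℕ × ℕ => ρ (x p.1 - x p.2)) (atTop ×ˢ atTop) (𝓝 0)

/-- `X_ρ` is `ρ`-complete if every `ρ`-Cauchy sequence in `X_ρ`
is `ρ`-convergent to a point of `X_ρ`. -/
def RhoComplete (ρ : X → ℝ≥0∞) : Prop :=
  ∀ x : ℕ → X, (∀ n, x n ∈ modularSpace ρ) → RhoCauchy ρ x →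
    ∃ a ∈ modularSpace ρ, RhoTendsto ρ x a

/-- The Fatou property of a modular. -/
def FatouProperty (ρ : X → ℝ≥0∞) : Prop :=
  ∀ (x y : ℕ → X) (a b : X), RhoTendsto ρ x a → RhoTendsto ρ y b →
    ρ (a - b) ≤ atTop.liminf (fun n => ρ (x n - y n))

/-- The `Δ₂`-type condition with constant `k`: `ρ(2x) ≤ k·ρ(x)` on `X_ρ`. -/
def Delta2Type (ρ : X → ℝ≥0∞) (k : ℝ≥0) : Prop :=
  ∀ x ∈ modularSpace ρ, ρ ((2 : ℝ) • x) ≤ (k : ℝ≥0∞) * ρ x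

/-- The `Δ₂`-condition: for sequences in `X_ρ`, `ρ(x_n) → 0` implies `ρ(2x_n) → 0`. -/
def Delta2Condition (ρ : X → ℝ≥0∞) : Prop :=
  ∀ x : ℕ → X, (∀ n, x n ∈ modularSpace ρ) →
    Tendsto (fun n => ρ (x n)) atTop (𝓝 0) →
      Tendsto (fun n => ρ ((2 : ℝ) • x n)) atTop (𝓝 0)

/-- The `F`-norm associated with a modular: `‖x‖_ρ = inf {t > 0 : ρ(x/t) ≤ t}`. -/
noncomputable def fnorm (ρ : X → ℝ≥0∞) (x : X) : ℝ :=
  sInf {t : ℝ | 0 < t ∧ ρ (t⁻¹ • x) ≤ ENNReal.ofReal t}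
/-- Banach contraction principle in complete modular spaces
with the Fatou property. -/
theorem banach_contraction_modular (ρ : X → ℝ≥0∞) (hmod : IsModular ρ)
    (hcomplete : RhoComplete ρ) (hFatou : FatouProperty ρ)
    (T : X → X) (hT : ∀ x ∈ modularSpace ρ, T x ∈ modularSpace ρ)
    (c : ℝ≥0) (hc : c < 1)
    (hcontr : ∀ x ∈ modularSpace ρ, ∀ y ∈ modularSpace ρ,
      ρ (T x - T y) ≤ (c : ℝ≥0∞) * ρ (x - y))
    (ω : X) (hω : ω ∈ modularSpace ρ)
    (hsup : (⨆ n ≥ 1, ρ ((2 : ℝ) • T^[n] ω)) < ⊤) :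
    ∃ x ∈ modularSpace ρ, T x = x := by
  obtain ⟨h0, hneg, hconv⟩ := hmod
  have half : ∀ x y : X, ρ (x - y) ≤ ρ ((2:ℝ) • x) + ρ ((2:ℝ) • y) := by
    intro x y
    have h := hconv ((2:ℝ) • x) (-((2:ℝ) • y)) (1/2) (1/2) (by norm_num) (by norm_num) (by norm_num)
    rw [hneg] at h
    have e : (1/2:ℝ) • (2:ℝ) • x + (1/2:ℝ) • (-((2:ℝ) • y)) = x - y := by
      module
    rwa [e] at h
  obtain ⟨M, hM⟩ : ∃ M, M = ⨆ n ≥ 1, ρ ((2 : ℝ) • T^[n] ω) := ⟨_, rfl⟩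
  rw [← hM] at hsup
  obtain ⟨y, hy⟩ : ∃ y : ℕ → X, y = fun n => T^[n+1] ω := ⟨_, rfl⟩
  have hyS : ∀ n, y (n+1) = T (y n) := by
    intro n
    rw [hy]
    exact Function.iterate_succ_apply' T (n+1) ω
  have hyM : ∀ n, ρ ((2:ℝ) • y n) ≤ M := by
    intro n
    rw [hM, hy]
    exact le_iSup₂ (f := fun n (_ : n ≥ 1) => ρ ((2 : ℝ) • T^[n] ω)) (n+1) (by omega)
  have hymem : ∀ n, y n ∈ modularSpace ρ := by
    intro n
    induction n with
    | zero => rw [hy]; exact hT _ hω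
    | succ k ih => rw [hyS]; exact hT _ ih
  have key : ∀ n i j, ρ (y (i+n) - y (j+n)) ≤ (c:ℝ≥0∞)^n * (M+M) := by
    intro n i j
    induction n with
    | zero => simpa using (half (y i) (y j)).trans (add_le_add (hyM i) (hyM j))
    | succ n ih =>
      rw [← add_assoc, ← add_assoc, hyS, hyS]
      refine (hcontr _ (hymem _) _ (hymem _)).trans ?_
      rw [pow_succ', mul_assoc]
      gcongr
  have hc' : (c:ℝ≥0∞) < 1 := by exact_mod_cast hc
  have hlim : Tendsto (fun n : ℕ => (c:ℝ≥0∞)^n * (M+M)) atTop (𝓝 0) := by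
    have h := ENNReal.Tendsto.mul_const (b := M+M) (ENNReal.tendsto_pow_atTop_nhds_zero_of_lt_one hc')
      (Or.inr (ENNReal.add_ne_top.2 ⟨hsup.ne, hsup.ne⟩))
    simpa using h
  have hcau : RhoCauchy ρ y := by
    have h := (hlim.comp (tendsto_fst (f := atTop) (g := (atTop : Filter ℕ)))).add
      (hlim.comp (tendsto_snd (f := (atTop : Filter ℕ)) (g := atTop)))
    rw [add_zero] at h
    refine tendsto_of_tendsto_of_tendsto_of_le_of_le tendsto_const_nhds h (fun _ => zero_le) ?_
    rintro ⟨m, n⟩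
    simp only [Function.comp]
    rcases le_total m n with hmn | hmn
    · have h := key m 0 (n - m)
      rw [zero_add, Nat.sub_add_cancel hmn] at h
      exact h.trans le_self_add
    · have h := key n (m - n) 0
      rw [zero_add, Nat.sub_add_cancel hmn] at h
      exact h.trans le_add_self
  obtain ⟨a, ha, hya⟩ := hcomplete y hymem hcau
  refine ⟨a, ha, ?_⟩
  have h1 : Tendsto (fun n => ρ (y (n+1) - a)) atTop (𝓝 0) :=
    (tendsto_add_atTop_iff_nat (f := fun n => ρ (y n - a)) 1).2 hya
  have h2 := hya.add h1
  rw [add_zero] at h2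
  have h3 : ρ ((1/2:ℝ) • (T a - a)) ≤ 0 := by
    refine ge_of_tendsto' h2 fun n => ?_
    have h := hconv (-(y (n+1) - T a)) (y (n+1) - a) (1/2) (1/2)
      (by norm_num) (by norm_num) (by norm_num)
    have e : (1/2:ℝ) • (-(y (n+1) - T a)) + (1/2:ℝ) • (y (n+1) - a) = (1/2:ℝ) • (T a - a) := by
      module
    rw [e, hneg] at h
    refine h.trans (add_le_add_left ?_ _)
    rw [hyS]
    refine (hcontr _ (hymem n) _ ha).trans ?_
    exact mul_le_of_le_one_left zero_le hc'.le
  have h4 := (h0 _).1 (le_antisymm h3 zero_le)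
  rw [smul_eq_zero] at h4
  rcases h4 with h4 | h4
  · norm_num at h4
  · exact sub_eq_zero.1 h4
end

section
/- Let X_ρ be a ρ-complete modular space whose modular ρ satisfies the Δ₂-type condition, i.e., there exists k > 0 such that ρ(2x) ≤ k·ρ(x) for all x ∈ X_ρ. If T : X_ρ → X_ρ is a mapping for which there exists c ∈ [0,1) with ρ(Tx − Ty) ≤ c·ρ(x − y) for all x, y ∈ X_ρ, then T has a fixed point. -/
open Filter Topology ENNReal NNReal

variable {X : Type*} [AddCommGroup X] [Module ℝ X]

theorem aux_sub (ρ : X → ℝ≥0∞) (hmod : IsModular ρ) (x y : X)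
    (hx : x ∈ modularSpace ρ) (hy : y ∈ modularSpace ρ) : x - y ∈ modularSpace ρ := by
  obtain ⟨h0, hn, ht⟩ := hmod
  simp only [modularSpace, Set.mem_ofPred_eq] at *
  have h2 : Tendsto (fun α : ℝ => 2 * α) (𝓝 0) (𝓝 0) := by
    have : Continuous (fun α : ℝ => 2 * α) := by fun_prop
    simpa using this.tendsto 0
  have h3 := (hx.comp h2).add (hy.comp h2)
  rw [add_zero] at h3
  refine tendsto_of_tendsto_of_tendsto_of_le_of_le tendsto_const_nhds h3 (fun _ => zero_le) ?_
  intro α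
  have := ht ((2 * α) • x) (-((2 * α) • y)) (1/2) (1/2) (by norm_num) (by norm_num) (by norm_num)
  rw [hn] at this
  have e : (1/2 : ℝ) • ((2 * α) • x) + (1/2 : ℝ) • (-((2 * α) • y)) = α • (x - y) := by module
  rw [e] at this
  exact this

theorem aux_smul (ρ : X → ℝ≥0∞) (x : X) (r : ℝ)
    (hx : x ∈ modularSpace ρ) : r • x ∈ modularSpace ρ := by
  simp only [modularSpace, Set.mem_ofPred_eq] at *
  have h2 : Tendsto (fun α : ℝ => α * r) (𝓝 0) (𝓝 0) := by
    have : Continuous (fun α : ℝ => α * r) := by fun_prop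
    simpa using this.tendsto 0
  have := hx.comp h2
  refine this.congr (fun α => ?_)
  simp [mul_smul]

theorem aux_fin (ρ : X → ℝ≥0∞) (k : ℝ≥0) (hΔ : Delta2Type ρ k) (x : X)
    (hx : x ∈ modularSpace ρ) : ρ x ≠ ∞ := by
  have key : ∀ n : ℕ, ρ (((1/2 : ℝ)^n) • x) ≠ ∞ → ρ x ≠ ∞ := by
    intro n
    induction n with
    | zero => simp
    | succ n ih =>
      intro h
      apply ih
      have h1 := hΔ _ (aux_smul ρ x ((1/2 : ℝ)^(n+1)) hx)
      have e : (2:ℝ) • ((1/2 : ℝ)^(n+1)) • x = ((1/2 : ℝ)^n) • x := by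
        rw [smul_smul]; congr 1; ring
      rw [e] at h1
      exact ne_top_of_le_ne_top (ENNReal.mul_ne_top ENNReal.coe_ne_top h) h1
  have hp : Tendsto (fun n : ℕ => (1/2 : ℝ)^n) atTop (𝓝 0) :=
    tendsto_pow_atTop_nhds_zero_of_lt_one (by norm_num) (by norm_num)
  have h2 : Tendsto (fun n : ℕ => ρ (((1/2 : ℝ)^n) • x)) atTop (𝓝 0) := by
    have hx' : Tendsto (fun α : ℝ => ρ (α • x)) (𝓝 0) (𝓝 0) := hx
    exact hx'.comp hp
  obtain ⟨n, hn⟩ := (h2.eventually (gt_mem_nhds zero_lt_one)).exists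
  exact key n (hn.trans ENNReal.one_lt_top).ne

theorem aux_tri (ρ : X → ℝ≥0∞) (hmod : IsModular ρ) (k : ℝ≥0) (hΔ : Delta2Type ρ k) (x y z : X)
    (hx : x ∈ modularSpace ρ) (hz : z ∈ modularSpace ρ) :
    ρ (x - z) ≤ k * (ρ (x - y) + ρ (y - z)) := by
  have h1 := hΔ _ (aux_smul ρ _ (1/2) (aux_sub ρ hmod x z hx hz))
  have h2 := hmod.2.2 (x - y) (y - z) (1/2) (1/2) (by norm_num) (by norm_num) (by norm_num)
  have e1 : (2:ℝ) • (1/2 : ℝ) • (x - z) = x - z := by module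
  have e2 : (1/2 : ℝ) • (x - y) + (1/2 : ℝ) • (y - z) = (1/2 : ℝ) • (x - z) := by module
  rw [e1] at h1
  rw [e2] at h2
  exact h1.trans (by gcongr)

/-- Banach contraction principle in complete modular spaces
satisfying the Δ₂-type condition. -/
theorem banach_contraction_modular_delta2Type (ρ : X → ℝ≥0∞) (hmod : IsModular ρ)
    (hcomplete : RhoComplete ρ)
    (k : ℝ≥0) (hk : 0 < k) (hΔ : Delta2Type ρ k)
    (T : X → X) (hT : ∀ x ∈ modularSpace ρ, T x ∈ modularSpace ρ)
    (c : ℝ≥0) (hc : c < 1)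
    (hcontr : ∀ x ∈ modularSpace ρ, ∀ y ∈ modularSpace ρ,
      ρ (T x - T y) ≤ (c : ℝ≥0∞) * ρ (x - y)) :
    ∃ x ∈ modularSpace ρ, T x = x := by
  have hsym : ∀ x y, ρ (x - y) = ρ (y - x) := fun x y => by rw [← hmod.2.1, neg_sub]
  have tri := aux_tri ρ hmod k hΔ
  have h0 : (0 : X) ∈ modularSpace ρ := by
    simp only [modularSpace, Set.mem_ofPred_eq, smul_zero, (hmod.1 0).2 rfl]
    exact tendsto_const_nhds
  set u : ℕ → X := fun n => T^[n] 0 with hu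
  have hus : ∀ n, u (n+1) = T (u n) := fun n => Function.iterate_succ_apply' T n 0
  have hum : ∀ n, u n ∈ modularSpace ρ := by
    intro n
    induction n with
    | zero => exact h0
    | succ n ih => rw [hus]; exact hT _ ih
  have hcn : ∀ n m, ρ (u n - u (n + m)) ≤ (c : ℝ≥0∞)^n * ρ (u 0 - u m) := by
    intro n m
    induction n with
    | zero => simp
    | succ n ih =>
      rw [show n + 1 + m = (n + m) + 1 by ring, hus, hus]
      refine (hcontr _ (hum _) _ (hum _)).trans ?_
      rw [pow_succ', mul_assoc]
      gcongr
  have hc' : (c : ℝ≥0∞) < 1 := by exact_mod_cast hc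
  have hpow : Tendsto (fun n : ℕ => (c : ℝ≥0∞)^n) atTop (𝓝 0) :=
    ENNReal.tendsto_pow_atTop_nhds_zero_of_lt_one hc'
  have hkpow : Tendsto (fun n : ℕ => (k : ℝ≥0∞) * (c : ℝ≥0∞)^n) atTop (𝓝 0) := by
    simpa using ENNReal.Tendsto.const_mul hpow (Or.inr ENNReal.coe_ne_top)
  obtain ⟨N, hN, hN1⟩ := ((hkpow.eventually (gt_mem_nhds
    (show (0 : ℝ≥0∞) < 2⁻¹ by simp))).and (eventually_ge_atTop 1)).exists
  have hfin : ∀ n, ρ (u 0 - u n) ≠ ∞ := fun n =>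
    aux_fin ρ k hΔ _ (aux_sub ρ hmod _ _ (hum _) (hum _))
  obtain ⟨S, hS⟩ : ∃ S, S = ∑ i ∈ Finset.range N, ρ (u 0 - u i) := ⟨_, rfl⟩
  have hSt : S ≠ ∞ := by
    rw [hS]; exact (ENNReal.sum_lt_top.2 fun i _ => (hfin i).lt_top).ne
  obtain ⟨M, hM⟩ : ∃ M, M = 2 * (S + k * ρ (u 0 - u N)) := ⟨_, rfl⟩
  have hMt : M ≠ ∞ := by
    rw [hM]
    exact ENNReal.mul_ne_top (by simp)
      (ENNReal.add_ne_top.2 ⟨hSt, ENNReal.mul_ne_top ENNReal.coe_ne_top (hfin N)⟩)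
  have hb : ∀ n, ρ (u 0 - u n) ≤ M := by
    intro n
    induction n using Nat.strong_induction_on with
    | _ n ih =>
      rcases lt_or_ge n N with h | h
      · have h1 : ρ (u 0 - u n) ≤ S := by
          rw [hS]
          exact Finset.single_le_sum (f := fun i => ρ (u 0 - u i)) (fun _ _ => zero_le)
            (Finset.mem_range.2 h)
        refine h1.trans ?_
        rw [hM, two_mul]
        exact le_self_add.trans le_self_add
      · obtain ⟨m, rfl⟩ := Nat.exists_eq_add_of_le h
        have h1 := ih m (by omega)
        calc ρ (u 0 - u (N + m)) ≤ k * (ρ (u 0 - u N) + ρ (u N - u (N + m))) :=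
              tri _ _ _ (hum _) (hum _)
          _ ≤ k * (ρ (u 0 - u N) + (c : ℝ≥0∞)^N * M) := by
              gcongr
              exact (hcn N m).trans (by gcongr)
          _ = k * ρ (u 0 - u N) + (k * (c : ℝ≥0∞)^N) * M := by ring
          _ ≤ k * ρ (u 0 - u N) + 2⁻¹ * M := by gcongr
          _ = k * ρ (u 0 - u N) + (S + k * ρ (u 0 - u N)) := by
              rw [hM, ← mul_assoc, ENNReal.inv_mul_cancel (by simp) (by simp), one_mul]
          _ ≤ M := by
              rw [hM, two_mul]
              gcongr
              exact le_add_self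
  have hMpow : Tendsto (fun n : ℕ => (c : ℝ≥0∞)^n * M) atTop (𝓝 0) := by
    simpa using ENNReal.Tendsto.mul_const hpow (Or.inr hMt)
  have hcau : RhoCauchy ρ u := by
    have h1 : Tendsto (fun p : ℕ × ℕ => (c : ℝ≥0∞)^p.1 * M + (c : ℝ≥0∞)^p.2 * M)
        (atTop ×ˢ atTop) (𝓝 0) := by
      simpa using (hMpow.comp tendsto_fst).add (hMpow.comp tendsto_snd)
    refine tendsto_of_tendsto_of_tendsto_of_le_of_le tendsto_const_nhds h1 (fun _ => zero_le) ?_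
    rintro ⟨m, n⟩
    have h2 : ∀ a b, a ≤ b → ρ (u a - u b) ≤ (c : ℝ≥0∞)^a * M := by
      intro a b hab
      obtain ⟨d, rfl⟩ := Nat.exists_eq_add_of_le hab
      exact (hcn a d).trans (by gcongr; exact hb d)
    rcases le_total m n with h | h
    · exact (h2 m n h).trans le_self_add
    · simp only
      rw [hsym]
      exact (h2 n m h).trans le_add_self
  obtain ⟨a, ha, hlim⟩ := hcomplete u hum hcau
  refine ⟨a, ha, ?_⟩
  have hlim0 : Tendsto (fun n => ρ (u n - a)) atTop (𝓝 0) := hlim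
  have hlim1 : Tendsto (fun n => ρ (u (n+1) - a)) atTop (𝓝 0) :=
    hlim0.comp (tendsto_add_atTop_nat 1)
  have hl : Tendsto (fun n => (k : ℝ≥0∞) * (c * ρ (u n - a) + ρ (u (n+1) - a))) atTop (𝓝 0) := by
    have h1 : Tendsto (fun n => (c : ℝ≥0∞) * ρ (u n - a)) atTop (𝓝 0) := by
      simpa using ENNReal.Tendsto.const_mul hlim0 (Or.inr (ENNReal.coe_ne_top (r := c)))
    simpa using ENNReal.Tendsto.const_mul (h1.add hlim1) (Or.inr (ENNReal.coe_ne_top (r := k)))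
  have hz : ρ (T a - a) ≤ 0 := by
    refine ge_of_tendsto' hl (fun n => ?_)
    refine (tri (T a) (u (n+1)) a (hT a ha) ha).trans ?_
    gcongr
    rw [hus, hsym (u n) a]
    exact hcontr a ha _ (hum n)
  exact sub_eq_zero.1 ((hmod.1 _).1 (le_antisymm hz zero_le))
end

section
/- Let X_ρ be a modular space whose modular ρ satisfies the Δ₂-type condition with constant k > 0, and let T : X_ρ → X_ρ satisfy ρ(Tx − Ty) ≤ c·ρ(x − y) for all x, y ∈ X_ρ, where c ∈ [0,1) and c·k < 1/2. If ε > 0, n ≥ 1, and p ≥ 1 are such that ρ(T^{n−1}x − Tⁿx) < ε and ρ(Tⁿx − T^{n+p}x) < ε, then ρ(Tⁿx − T^{n+p+1}x) < ε. -/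
open Filter Topology ENNReal NNReal

variable {X : Type*} [AddCommGroup X] [Module ℝ X]

/-- Inductive step of the Cauchy argument: under the Δ₂-type
condition with `c·k < 1/2`, control of two consecutive gaps propagates. -/
theorem picard_gap_induction_step (ρ : X → ℝ≥0∞) (hmod : IsModular ρ)
    (k : ℝ≥0) (hk : 0 < k) (hΔ : Delta2Type ρ k)
    (T : X → X) (hT : ∀ x ∈ modularSpace ρ, T x ∈ modularSpace ρ)
    (c : ℝ≥0) (hc : c < 1) (hck : (c : ℝ) * k < 1 / 2)
    (hcontr : ∀ x ∈ modularSpace ρ, ∀ y ∈ modularSpace ρ,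
      ρ (T x - T y) ≤ (c : ℝ≥0∞) * ρ (x - y))
    (x : X) (hx : x ∈ modularSpace ρ)
    (ε : ℝ≥0∞) (hε : 0 < ε) (n p : ℕ) (hn : 1 ≤ n) (hp : 1 ≤ p)
    (h1 : ρ (T^[n - 1] x - T^[n] x) < ε)
    (h2 : ρ (T^[n] x - T^[n + p] x) < ε) :
    ρ (T^[n] x - T^[n + p + 1] x) < ε := by
  obtain ⟨-, hneg, hconv⟩ := hmod
  have hit : ∀ m, T^[m] x ∈ modularSpace ρ := by
    intro m
    induction m with
    | zero => exact hx
    | succ m ih => rw [Function.iterate_succ_apply']; exact hT _ ih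
  have hhalf : ∀ u v : X, ρ ((1 / 2 : ℝ) • (u + v)) ≤ ρ u + ρ v := by
    intro u v
    rw [smul_add]
    exact hconv u v _ _ (by norm_num) (by norm_num) (by norm_num)
  obtain ⟨m, rfl⟩ : ∃ m, n = m + 1 := ⟨n - 1, by omega⟩
  simp only [Nat.add_sub_cancel] at h1
  have hu := hit m
  have hv := hit (m + 1 + p)
  have e1 := hcontr _ hu _ hv
  rw [← Function.iterate_succ_apply' T, ← Function.iterate_succ_apply' T] at e1
  have e2 := hhalf (T^[m] x - T^[m + 1] x) (T^[m + 1] x - T^[m + 1 + p] x)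
  rw [sub_add_sub_cancel] at e2
  generalize T^[m] x = u at *
  generalize T^[m + 1 + p] x = v at *
  have hmem : (1 / 2 : ℝ) • (u - v) ∈ modularSpace ρ := by
    have hs : Tendsto (fun α : ℝ => ρ (α • u) + ρ (α • v)) (𝓝 0) (𝓝 0) := by
      simpa using Tendsto.add (show Tendsto _ _ _ from hu) (show Tendsto _ _ _ from hv)
    refine tendsto_of_tendsto_of_tendsto_of_le_of_le tendsto_const_nhds hs
      (fun _ => zero_le) (fun α => ?_)
    have h := hhalf (α • u) (-(α • v))
    rw [hneg, ← sub_eq_add_neg, ← smul_sub, smul_comm] at h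
    exact h
  have e3 := hΔ _ hmem
  rw [smul_smul, show (2 : ℝ) * (1 / 2) = 1 by norm_num, one_smul] at e3
  have hck' : (c : ℝ≥0∞) * k ≤ 2⁻¹ := by
    have h : c * k ≤ 2⁻¹ := by
      rw [← NNReal.coe_le_coe]; push_cast; linarith
    have h' := ENNReal.coe_le_coe.2 h
    simpa using h'
  refine e1.trans_lt ?_
  calc (c : ℝ≥0∞) * ρ (u - v)
      ≤ c * (k * (ρ (u - T^[m + 1] x) + ρ (T^[m + 1] x - v))) := by
        gcongr; exact e3.trans (by gcongr)
    _ = c * k * (ρ (u - T^[m + 1] x) + ρ (T^[m + 1] x - v)) := by ring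
    _ ≤ 2⁻¹ * (max (ρ (u - T^[m + 1] x)) (ρ (T^[m + 1] x - v)) +
          max (ρ (u - T^[m + 1] x)) (ρ (T^[m + 1] x - v))) := by
        gcongr
        · exact le_max_left _ _
        · exact le_max_right _ _
    _ = max (ρ (u - T^[m + 1] x)) (ρ (T^[m + 1] x - v)) := by
        rw [← two_mul, ← mul_assoc, ENNReal.inv_mul_cancel (by norm_num) (by norm_num), one_mul]
    _ < ε := max_lt h1 h2
end

section
/- Let ρ be a modular on a real vector space X with the Fatou property. Suppose {x_n} is a sequence in X_ρ and {α_n} is a nonincreasing sequence in [0,∞) converging to α₀ such that ρ(x_n − x_m) ≤ α_n − α_m whenever n ≤ m, and suppose ρ(x_n − x₀) → 0 for some x₀ ∈ X_ρ. Then ρ(x_n − x₀) ≤ α_n − α₀ for every n. -/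
open Filter Topology ENNReal NNReal

variable {X : Type*} [AddCommGroup X] [Module ℝ X]

/-- Under the Fatou property, the control
`ρ(x_n − x_m) ≤ α_n − α_m` passes to the limit: `ρ(x_n − x₀) ≤ α_n − α₀`. -/
theorem rho_control_passes_to_limit (ρ : X → ℝ≥0∞) (hmod : IsModular ρ)
    (hFatou : FatouProperty ρ)
    (x : ℕ → X) (hx : ∀ n, x n ∈ modularSpace ρ)
    (α : ℕ → ℝ) (hα0 : ∀ n, 0 ≤ α n) (hαmono : Antitone α)
    (α₀ : ℝ) (hαlim : Filter.Tendsto α Filter.atTop (𝓝 α₀))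
    (hctrl : ∀ n m : ℕ, n ≤ m → ρ (x n - x m) ≤ ENNReal.ofReal (α n - α m))
    (x₀ : X) (hx₀ : x₀ ∈ modularSpace ρ) (hlim : RhoTendsto ρ x x₀) :
    ∀ n, ρ (x n - x₀) ≤ ENNReal.ofReal (α n - α₀) := by
  intro n
  have hc : RhoTendsto ρ (fun _ => x n) (x n) := by
    have h0 : ρ 0 = 0 := (hmod.1 0).2 rfl
    simp [RhoTendsto, h0]
  refine (hFatou (fun _ => x n) x (x n) x₀ hc hlim).trans ?_
  have ht : Tendsto (fun m => ENNReal.ofReal (α n - α m)) atTop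
      (𝓝 (ENNReal.ofReal (α n - α₀))) :=
    ENNReal.tendsto_ofReal (tendsto_const_nhds.sub hαlim)
  rw [← ht.liminf_eq]
  refine liminf_le_liminf ?_
  filter_upwards [eventually_ge_atTop n] with m hm
  exact hctrl n m hm
end

section
/- Let ρ be a modular on a real vector space X with the Fatou property, and let T : X_ρ → X_ρ satisfy ρ(Tx − Ty) ≤ c·ρ(x − y) for all x, y ∈ X_ρ, where c ∈ [0,1). If b, x₀ ∈ X_ρ are such that ρ(Tⁿb − x₀) → 0 as n → ∞, then Tx₀ = x₀. -/
open Filter Topology ENNReal NNReal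

variable {X : Type*} [AddCommGroup X] [Module ℝ X]

/-- Under the Fatou property, a ρ-limit of the Picard
iterates of a ρ-contraction is a fixed point. -/
theorem fixedPoint_of_picard_limit (ρ : X → ℝ≥0∞) (hmod : IsModular ρ)
    (hFatou : FatouProperty ρ)
    (T : X → X) (hT : ∀ x ∈ modularSpace ρ, T x ∈ modularSpace ρ)
    (c : ℝ≥0) (hc : c < 1)
    (hcontr : ∀ x ∈ modularSpace ρ, ∀ y ∈ modularSpace ρ,
      ρ (T x - T y) ≤ (c : ℝ≥0∞) * ρ (x - y))
    (b x₀ : X) (hb : b ∈ modularSpace ρ) (hx₀ : x₀ ∈ modularSpace ρ)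
    (hlim : RhoTendsto ρ (fun n => T^[n] b) x₀) :
    T x₀ = x₀ := by
  obtain ⟨h0, hneg, hconv⟩ := hmod
  have hmem : ∀ n : ℕ, T^[n] b ∈ modularSpace ρ := by
    intro n
    induction n with
    | zero => exact hb
    | succ k ih => rw [Function.iterate_succ_apply']; exact hT _ ih
  have h1 : Tendsto (fun n => ρ (T^[n] b - x₀)) atTop (𝓝 0) := hlim
  have h2 : Tendsto (fun n => ρ (T^[n+1] b - x₀)) atTop (𝓝 0) :=
    h1.comp (tendsto_add_atTop_nat 1)
  have h3 : Tendsto (fun n => ρ (T^[n] b - x₀) + ρ (T^[n+1] b - x₀)) atTop (𝓝 0) := by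
    simpa using h1.add h2
  have hle : ∀ n : ℕ, ρ ((1/2 : ℝ) • (T x₀ - x₀)) ≤
      ρ (T^[n] b - x₀) + ρ (T^[n+1] b - x₀) := by
    intro n
    have e : (1/2 : ℝ) • (T x₀ - x₀) =
        (1/2 : ℝ) • (-(T^[n+1] b - T x₀)) + (1/2 : ℝ) • (T^[n+1] b - x₀) := by
      rw [← smul_add]
      congr 1
      abel
    rw [e]
    refine (hconv _ _ _ _ (by norm_num) (by norm_num) (by norm_num)).trans ?_
    rw [hneg]
    gcongr
    rw [Function.iterate_succ_apply']
    refine (hcontr _ (hmem n) _ hx₀).trans ?_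
    have hc1 : (c : ℝ≥0∞) ≤ 1 := by exact_mod_cast hc.le
    exact mul_le_of_le_one_left zero_le hc1
  have hz : ρ ((1/2 : ℝ) • (T x₀ - x₀)) = 0 :=
    le_antisymm (ge_of_tendsto' h3 hle) zero_le
  have h4 := (h0 _).1 hz
  rcases smul_eq_zero.1 h4 with h | h
  · norm_num at h
  · exact sub_eq_zero.1 h
end
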